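/- Let 0 < β < 1 and let λ > 0 and τ > 0 be real numbers. Then the integral ∫_{-1}^{1} (1-t)^{β-1}(1+t)^{-β} (τ(1-t) + (1+t)λ)^{-1} dt converges and λ^β = (2 sin(βπ)/π) · τ^β · λ · ∫_{-1}^{1} (1-t)^{β-1}(1+t)^{-β} (τ(1-t) + (1+t)λ)^{-1} dt. -/

import Mathlib

open MeasureTheory Real

/-!
The substitution `x = τ (b - t) / (τ (b - t) + (t - a) λ)` is a decreasing bijection of `(a, b)`
onto `(0, 1)`, with `1 - x = (t - a) λ / (τ (b - t) + (t - a) λ)`. It turns the Beta integral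
`∫ x ^ (u - 1) (1 - x) ^ (v - 1) dx` into a constant multiple of the integral of
`(b - t) ^ (u - 1) (t - a) ^ (v - 1) (τ (b - t) + (t - a) λ) ^ (-(u + v))`. For `u = β` and
`v = 1 - β` the last exponent is `-1`, and Euler's reflection formula evaluates the Beta function.
-/

section BetaIntegral

open Set ProbabilityTheory

variable {u v : ℝ}

lemma eqOn_cpow_mul_one_sub_cpow_ofReal (u v : ℝ) :
    EqOn (fun x : ℝ ↦ (x : ℂ) ^ ((u : ℂ) - 1) * (1 - (x : ℂ)) ^ ((v : ℂ) - 1))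
      (fun x ↦ ((x ^ (u - 1) * (1 - x) ^ (v - 1) : ℝ) : ℂ)) (Ioo 0 1) := by
  intro x hx
  dsimp only
  rw [Complex.ofReal_mul, Complex.ofReal_cpow hx.1.le, Complex.ofReal_cpow (sub_pos.2 hx.2).le]
  push_cast
  rfl

lemma integrableOn_rpow_mul_one_sub_rpow (hu : 0 < u) (hv : 0 < v) :
    IntegrableOn (fun x : ℝ ↦ x ^ (u - 1) * (1 - x) ^ (v - 1)) (Ioo 0 1) := by
  have h := Complex.betaIntegral_convergent (u := u) (v := v) (by simpa) (by simpa)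
  rw [intervalIntegrable_iff_integrableOn_Ioo_of_le zero_le_one,
    integrableOn_congr_fun (eqOn_cpow_mul_one_sub_cpow_ofReal u v) measurableSet_Ioo] at h
  exact h.re

lemma integral_rpow_mul_one_sub_rpow (hu : 0 < u) (hv : 0 < v) :
    ∫ x in Ioo (0 : ℝ) 1, x ^ (u - 1) * (1 - x) ^ (v - 1) = beta u v := by
  rw [beta_eq_betaIntegralReal u v hu hv, Complex.betaIntegral,
    intervalIntegral.integral_of_le zero_le_one, integral_Ioc_eq_integral_Ioo,
    setIntegral_congr_fun measurableSet_Ioo (eqOn_cpow_mul_one_sub_cpow_ofReal u v),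
    integral_complex_ofReal, Complex.ofReal_re]

lemma beta_one_sub (s : ℝ) : beta s (1 - s) = π / sin (π * s) := by
  rw [beta, add_sub_cancel, Gamma_one, div_one, Gamma_mul_Gamma_one_sub]

end BetaIntegral

section MobiusSubstitution

open Set

/-- The Möbius substitution taking `a, b` to `1, 0`, with the positive parameters `τ` and `lam`
weighting the distances from `t` to the endpoints `b` and `a`. -/
noncomputable def mobiusRatio (a b τ lam t : ℝ) : ℝ :=
  τ * (b - t) / (τ * (b - t) + (t - a) * lam)

variable {a b τ lam t : ℝ}

lemma mobiusRatio_denom_pos (hτ : 0 < τ) (hlam : 0 < lam) (ht : t ∈ Ioo a b) :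
    0 < τ * (b - t) + (t - a) * lam :=
  add_pos (mul_pos hτ (sub_pos.2 ht.2)) (mul_pos (sub_pos.2 ht.1) hlam)

lemma one_sub_mobiusRatio (h : τ * (b - t) + (t - a) * lam ≠ 0) :
    1 - mobiusRatio a b τ lam t = (t - a) * lam / (τ * (b - t) + (t - a) * lam) := by
  rw [mobiusRatio, one_sub_div h, add_sub_cancel_left]

lemma hasDerivAt_mobiusRatio (h : τ * (b - t) + (t - a) * lam ≠ 0) :
    HasDerivAt (mobiusRatio a b τ lam)
      (-((b - a) * τ * lam / (τ * (b - t) + (t - a) * lam) ^ 2)) t := by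
  have hnum : HasDerivAt (fun s ↦ τ * (b - s)) (τ * -1) t :=
    ((hasDerivAt_id t).const_sub b).const_mul τ
  have hrest : HasDerivAt (fun s ↦ (s - a) * lam) (1 * lam) t :=
    ((hasDerivAt_id t).sub_const a).mul_const lam
  refine (hnum.fun_div (hnum.fun_add hrest) h).congr_deriv ?_
  ring

lemma mapsTo_mobiusRatio (hτ : 0 < τ) (hlam : 0 < lam) :
    MapsTo (mobiusRatio a b τ lam) (Ioo a b) (Ioo 0 1) := by
  intro t ht
  have hD := mobiusRatio_denom_pos hτ hlam ht
  refine ⟨div_pos (mul_pos hτ (sub_pos.2 ht.2)) hD, sub_pos.1 ?_⟩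
  rw [one_sub_mobiusRatio hD.ne']
  exact div_pos (mul_pos (sub_pos.2 ht.1) hlam) hD

lemma injOn_mobiusRatio (hτ : 0 < τ) (hlam : 0 < lam) :
    InjOn (mobiusRatio a b τ lam) (Ioo a b) := by
  intro s hs t ht hst
  rw [mobiusRatio, mobiusRatio, div_eq_div_iff (mobiusRatio_denom_pos hτ hlam hs).ne'
    (mobiusRatio_denom_pos hτ hlam ht).ne'] at hst
  have hab : b - a ≠ 0 := (sub_pos.2 (hs.1.trans hs.2)).ne'
  refine mul_left_cancel₀ (mul_ne_zero (mul_ne_zero hab hτ.ne') hlam.ne') ?_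
  linear_combination -hst

lemma surjOn_mobiusRatio (hab : a < b) (hτ : 0 < τ) (hlam : 0 < lam) :
    SurjOn (mobiusRatio a b τ lam) (Ioo a b) (Ioo 0 1) := by
  rintro x ⟨hx0, hx1⟩
  have hp : 0 < τ * (1 - x) := mul_pos hτ (sub_pos.2 hx1)
  have hq : 0 < lam * x := mul_pos hlam hx0
  have hab' : 0 < b - a := sub_pos.2 hab
  set E := τ * (1 - x) + lam * x with hE
  have hE0 : 0 < E := add_pos hp hq
  set t := (τ * (1 - x) * b + lam * x * a) / E with ht_def
  have hbt : b - t = lam * x * (b - a) / E := by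
    rw [ht_def, sub_div' hE0.ne', hE]; ring
  have hta : t - a = τ * (1 - x) * (b - a) / E := by
    rw [ht_def, div_sub' hE0.ne', hE]; ring
  refine ⟨t, ⟨sub_pos.1 ?_, sub_pos.1 ?_⟩, ?_⟩
  · rw [hta]; positivity
  · rw [hbt]; positivity
  · rw [mobiusRatio, hbt, hta]
    field_simp
    ring

lemma bijOn_mobiusRatio (hab : a < b) (hτ : 0 < τ) (hlam : 0 < lam) :
    BijOn (mobiusRatio a b τ lam) (Ioo a b) (Ioo 0 1) :=
  ⟨mapsTo_mobiusRatio hτ hlam, injOn_mobiusRatio hτ hlam, surjOn_mobiusRatio hab hτ hlam⟩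

end MobiusSubstitution

section JacobiIntegral

open Set ProbabilityTheory

lemma div_rpow_mul_div_rpow_div_sq {x y d : ℝ} (hx : 0 ≤ x) (hy : 0 ≤ y) (hd : 0 < d) (u v : ℝ) :
    (x / d) ^ (u - 1) * (y / d) ^ (v - 1) / d ^ 2 =
      x ^ (u - 1) * y ^ (v - 1) * d ^ (-(u + v)) := by
  have hpow : d ^ (u - 1) * d ^ (v - 1) * d ^ 2 = d ^ (u + v) := by
    rw [← rpow_natCast, ← rpow_add hd, ← rpow_add hd]
    congr 1
    push_cast
    ring
  rw [div_rpow hx hd.le, div_rpow hy hd.le, rpow_neg hd.le, ← hpow]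
  field_simp

variable {a b τ lam u v : ℝ}

lemma eqOn_abs_deriv_smul_mobiusRatio (hτ : 0 < τ) (hlam : 0 < lam) (u v : ℝ) :
    EqOn
      (fun t ↦ |-((b - a) * τ * lam / (τ * (b - t) + (t - a) * lam) ^ 2)| •
        (mobiusRatio a b τ lam t ^ (u - 1) * (1 - mobiusRatio a b τ lam t) ^ (v - 1)))
      (fun t ↦ (b - a) * τ ^ u * lam ^ v *
        ((b - t) ^ (u - 1) * (t - a) ^ (v - 1) * (τ * (b - t) + (t - a) * lam) ^ (-(u + v))))
      (Ioo a b) := by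
  intro t ht
  have hbt : 0 < b - t := sub_pos.2 ht.2
  have hta : 0 < t - a := sub_pos.2 ht.1
  have hab : 0 < b - a := sub_pos.2 (ht.1.trans ht.2)
  have hD := mobiusRatio_denom_pos hτ hlam ht
  dsimp only
  rw [one_sub_mobiusRatio hD.ne', mobiusRatio, abs_neg, abs_of_pos (by positivity), smul_eq_mul]
  set D := τ * (b - t) + (t - a) * lam
  calc (b - a) * τ * lam / D ^ 2 *
        ((τ * (b - t) / D) ^ (u - 1) * ((t - a) * lam / D) ^ (v - 1))
      = (b - a) * τ * lam *
          ((τ * (b - t) / D) ^ (u - 1) * ((t - a) * lam / D) ^ (v - 1) / D ^ 2) := by ring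
    _ = (b - a) * τ * lam *
          ((τ * (b - t)) ^ (u - 1) * ((t - a) * lam) ^ (v - 1) * D ^ (-(u + v))) := by
        rw [div_rpow_mul_div_rpow_div_sq (by positivity) (by positivity) hD]
    _ = (b - a) * (τ ^ (u - 1) * τ) * (lam ^ (v - 1) * lam) *
          ((b - t) ^ (u - 1) * (t - a) ^ (v - 1) * D ^ (-(u + v))) := by
        rw [mul_rpow hτ.le hbt.le, mul_rpow hta.le hlam.le]; ring
    _ = (b - a) * τ ^ u * lam ^ v *
          ((b - t) ^ (u - 1) * (t - a) ^ (v - 1) * D ^ (-(u + v))) := by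
        rw [← rpow_add_one hτ.ne', ← rpow_add_one hlam.ne', sub_add_cancel, sub_add_cancel]

lemma integrableOn_jacobiWeight_mul_rpow_neg_add (hab : a < b) (hτ : 0 < τ) (hlam : 0 < lam)
    (hu : 0 < u) (hv : 0 < v) :
    IntegrableOn
      (fun t ↦ (b - t) ^ (u - 1) * (t - a) ^ (v - 1) * (τ * (b - t) + (t - a) * lam) ^ (-(u + v)))
      (Ioo a b) := by
  have hc : (b - a) * τ ^ u * lam ^ v ≠ 0 := by
    have := sub_pos.2 hab
    positivity
  have hbeta := integrableOn_rpow_mul_one_sub_rpow hu hv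
  rw [← (bijOn_mobiusRatio hab hτ hlam).image_eq,
    integrableOn_image_iff_integrableOn_abs_deriv_smul measurableSet_Ioo
      (fun t ht ↦ (hasDerivAt_mobiusRatio (mobiusRatio_denom_pos hτ hlam ht).ne').hasDerivWithinAt)
      (injOn_mobiusRatio hτ hlam),
    integrableOn_congr_fun (eqOn_abs_deriv_smul_mobiusRatio hτ hlam u v) measurableSet_Ioo] at hbeta
  exact (integrable_const_mul_iff hc.isUnit _).1 hbeta

lemma integral_jacobiWeight_mul_rpow_neg_add (hab : a < b) (hτ : 0 < τ) (hlam : 0 < lam)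
    (hu : 0 < u) (hv : 0 < v) :
    ∫ t in Ioo a b,
        (b - t) ^ (u - 1) * (t - a) ^ (v - 1) * (τ * (b - t) + (t - a) * lam) ^ (-(u + v)) =
      beta u v / ((b - a) * τ ^ u * lam ^ v) := by
  have hc : (b - a) * τ ^ u * lam ^ v ≠ 0 := by
    have := sub_pos.2 hab
    positivity
  rw [eq_div_iff hc, mul_comm, ← integral_const_mul, ← integral_rpow_mul_one_sub_rpow hu hv,
    ← (bijOn_mobiusRatio hab hτ hlam).image_eq,
    integral_image_eq_integral_abs_deriv_smul measurableSet_Ioo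
      (fun t ht ↦ (hasDerivAt_mobiusRatio (mobiusRatio_denom_pos hτ hlam ht).ne').hasDerivWithinAt)
      (injOn_mobiusRatio hτ hlam),
    setIntegral_congr_fun measurableSet_Ioo (eqOn_abs_deriv_smul_mobiusRatio hτ hlam u v)]

end JacobiIntegral

/-- For `0 < β < 1`, `λ > 0`, `τ > 0`, the Jacobi-weighted integral
`∫_{-1}^{1} (1-t)^{β-1}(1+t)^{-β} (τ(1-t) + (1+t)λ)⁻¹ dt` converges and
`λ^β = (2 sin(βπ)/π) τ^β λ ∫_{-1}^{1} (1-t)^{β-1}(1+t)^{-β} (τ(1-t)+(1+t)λ)⁻¹ dt`. -/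
theorem stmt2 (β lam τ : ℝ) (hβ0 : 0 < β) (hβ1 : β < 1) (hlam : 0 < lam) (hτ : 0 < τ) :
    IntegrableOn
      (fun t : ℝ => (1 - t) ^ (β - 1) * (1 + t) ^ (-β) * (τ * (1 - t) + (1 + t) * lam)⁻¹)
      (Set.Ioo (-1) 1) ∧
    lam ^ β = (2 * Real.sin (β * Real.pi) / Real.pi) * τ ^ β * lam *
      ∫ t in Set.Ioo (-1 : ℝ) 1,
        (1 - t) ^ (β - 1) * (1 + t) ^ (-β) * (τ * (1 - t) + (1 + t) * lam)⁻¹ := by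
  have integrand_eq (t : ℝ) :
      (1 - t) ^ (β - 1) * (1 + t) ^ (-β) * (τ * (1 - t) + (1 + t) * lam)⁻¹ =
        (1 - t) ^ (β - 1) * (t - -1) ^ (1 - β - 1) *
          (τ * (1 - t) + (t - -1) * lam) ^ (-(β + (1 - β))) := by
    rw [sub_neg_eq_add, add_comm t, add_sub_cancel, rpow_neg_one, sub_sub_cancel_left]
  have hlt : (-1 : ℝ) < 1 := by norm_num
  have hβ1' : 0 < 1 - β := sub_pos.2 hβ1
  have hsin : sin (β * π) ≠ 0 :=
    (sin_pos_of_pos_of_lt_pi (by positivity) (mul_lt_of_lt_one_left pi_pos hβ1)).ne'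
  have hlam_pow : lam ^ β * lam ^ (1 - β) = lam := by
    rw [← rpow_add hlam, add_sub_cancel, rpow_one]
  simp only [integrand_eq]
  refine ⟨integrableOn_jacobiWeight_mul_rpow_neg_add hlt hτ hlam hβ0 hβ1', ?_⟩
  rw [integral_jacobiWeight_mul_rpow_neg_add hlt hτ hlam hβ0 hβ1', beta_one_sub, mul_comm π β]
  field_simp
  linear_combination 2 * hlam_pow
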